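/- Let H be a finitely generated group, Q a finite-index normal subgroup of H, and φ an automorphism of H. Then the intersection ⋂_{i ∈ ℤ} φⁱ(Q) is a finite-index normal subgroup of H. -/

import Mathlib

/-!
A subgroup `K` of index `n` is the stabilizer of a point in the action of the group on its `n`
cosets of `K`, so it is determined by a homomorphism to `Equiv.Perm (Fin n)` together with a point
of `Fin n`. A finitely generated group has only finitely many such homomorphisms, hence only
finitely many subgroups of index `n`. The images of `Q` have index dividing `Q.index`, so they form
a finite family.
-/

theorem finite_monoidHom_of_fg (M N : Type*) [Monoid M] [Monoid.FG M] [MulOneClass N] [Finite N] :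
    Finite (M →* N) := by
  obtain ⟨S, hS⟩ := Monoid.fg_def.mp ‹Monoid.FG M›
  refine Finite.of_injective (fun (f : M →* N) (s : S) ↦ f s) fun f g hfg ↦ ?_
  exact MonoidHom.eq_of_eqOn_denseM hS fun s hs ↦ congrFun hfg ⟨s, hs⟩

section Subgroup

variable {G : Type*} [Group G]

theorem exists_eq_comap_stabilizer_perm_fin (K : Subgroup G) [K.FiniteIndex] :
    ∃ (f : G →* Equiv.Perm (Fin K.index)) (a : Fin K.index),
      (MulAction.stabilizer (Equiv.Perm (Fin K.index)) a).comap f = K := by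
  let e : G ⧸ K ≃ Fin K.index := Finite.equivFin (G ⧸ K)
  refine ⟨e.permCongrHom.toMonoidHom.comp (MulAction.toPermHom G (G ⧸ K)), e (1 : G), ?_⟩
  ext g
  have mem_iff_smul_eq : g ∈ K ↔ g • ((1 : G) : G ⧸ K) = (1 : G) := by
    rw [← MulAction.mem_stabilizer_iff, MulAction.stabilizer_quotient]
  simp [mem_iff_smul_eq]

theorem finite_setOf_index_eq [Group.FG G] {n : ℕ} (hn : n ≠ 0) :
    {K : Subgroup G | K.index = n}.Finite := by
  have : Finite (G →* Equiv.Perm (Fin n)) := finite_monoidHom_of_fg _ _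
  let comapStabilizer (p : (G →* Equiv.Perm (Fin n)) × Fin n) : Subgroup G :=
    (MulAction.stabilizer (Equiv.Perm (Fin n)) p.2).comap p.1
  refine (Set.finite_range comapStabilizer).subset ?_
  rintro K rfl
  have : K.FiniteIndex := ⟨hn⟩
  obtain ⟨f, a, hfa⟩ := exists_eq_comap_stabilizer_perm_fin K
  exact ⟨(f, a), hfa⟩

theorem finite_setOf_index_dvd [Group.FG G] {n : ℕ} (hn : n ≠ 0) :
    {K : Subgroup G | K.index ∣ n}.Finite := by
  refine (n.divisors.finite_toSet.biUnion fun d hd ↦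
    finite_setOf_index_eq (Nat.pos_of_mem_divisors hd).ne').subset fun K hK ↦ ?_
  exact Set.mem_biUnion (Nat.mem_divisors.mpr ⟨hK, hn⟩) rfl

theorem finiteIndex_iInf_of_index_dvd [Group.FG G] {ι : Sort*} {K : ι → Subgroup G} {n : ℕ}
    (hn : n ≠ 0) (hK : ∀ i, (K i).index ∣ n) : (⨅ i, K i).FiniteIndex := by
  have : Finite (Set.range K) :=
    ((finite_setOf_index_dvd hn).subset (Set.range_subset_iff.mpr hK)).to_subtype
  rw [← sInf_range, sInf_eq_iInf']
  refine Subgroup.finiteIndex_iInf ?_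
  rintro ⟨_, i, rfl⟩
  exact ⟨ne_zero_of_dvd_ne_zero hn (hK i)⟩

end Subgroup

theorem stmt_12_general {G H : Type*} [Group G] [Group.FG G] [Group H] {ι : Sort*} (Q : Subgroup H)
    (hQn : Q.Normal) (hQfi : Q.FiniteIndex) {f : ι → H →* G}
    (hf : ∀ i, Function.Surjective (f i)) :
    (⨅ i, Q.map (f i)).Normal ∧ (⨅ i, Q.map (f i)).FiniteIndex :=
  ⟨Subgroup.normal_iInf_normal fun i ↦ hQn.map (f i) (hf i),
    finiteIndex_iInf_of_index_dvd hQfi.index_ne_zero fun i ↦ Q.index_map_dvd (hf i)⟩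

/-- For `H` finitely generated, `Q` a finite-index normal subgroup of `H` and `φ` an
automorphism of `H`, the intersection `⋂_{i ∈ ℤ} φⁱ(Q)` is a finite-index normal
subgroup of `H`. -/
theorem stmt_12 {H : Type*} [Group H] [Group.FG H] (Q : Subgroup H)
    (hQn : Q.Normal) (hQfi : Q.FiniteIndex) (φ : MulAut H) :
    (⨅ i : ℤ, Q.map (φ ^ i).toMonoidHom).Normal ∧
      (⨅ i : ℤ, Q.map (φ ^ i).toMonoidHom).FiniteIndex :=
  stmt_12_general Q hQn hQfi fun i ↦ (φ ^ i).surjective
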